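/- arXiv:1310.7260 — 2 statements merged into one kernel-verified Lean document; each statement's English description precedes it below -/
import Mathlib

section
/- For every integer d ≥ 2, the random variable (1/(d·n^{(2d−1)/2}))·( ∑_{1≤i₁,…,i_d≤n} 1_{gcd(X_{i₁},…,X_{i_d})=1} − n^d·∏_{p prime}(1 − 1/p^d) ) converges in distribution, as n → ∞, to a centered normal distribution with variance ∏_{p prime}(1 − 2/p^d + 1/p^{2d−1}) − ( ∏_{p prime}(1 − 1/p^d) )². -/
open MeasureTheory ProbabilityTheory Filter Real BoundedContinuousFunction

/-- The joint law of `n` i.i.d. random variables, each uniformly distributed on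
`{1, 2, …, n}` (the coordinates `ω ↦ ω i` are the random variables `X_i`). -/
noncomputable def unifVec (n : ℕ) : Measure (Fin n → ℕ) :=
  Measure.pi fun _ => uniformOn (Set.Icc 1 n)


noncomputable def gmul (h : ℕ → ℝ) (k : ℕ) : ℝ :=
  if Squarefree k then ∏ p ∈ k.primeFactors, h p else 0

lemma gmul_sum (h : ℕ → ℝ) {x : ℕ} (hx : x ≠ 0) :
    ∑ k ∈ x.divisors, gmul h k = ∏ p ∈ x.primeFactors, (1 + h p) := by
  unfold gmul
  rw [← Finset.sum_filter, Finset.prod_one_add]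
  refine Finset.sum_bij' (fun k _ => k.primeFactors) (fun s _ => ∏ p ∈ s, p) ?_ ?_ ?_ ?_ ?_
  · intro k hk
    simp only [Finset.mem_filter, Nat.mem_divisors] at hk
    simp only [Finset.mem_powerset]
    exact Nat.primeFactors_mono hk.1.1 hx
  · intro s hs
    simp only [Finset.mem_powerset] at hs
    simp only [Finset.mem_filter, Nat.mem_divisors]
    refine ⟨⟨?_, hx⟩, ?_⟩
    · exact (Finset.prod_dvd_prod_of_subset _ _ _ hs).trans (Nat.prod_primeFactors_dvd x)
    · refine (Finset.squarefree_prod_of_pairwise_isCoprime ?_ ?_)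
      · intro p hp q hq hpq
        have h1 := Nat.prime_of_mem_primeFactors (hs hp)
        have h2 := Nat.prime_of_mem_primeFactors (hs hq)
        exact Nat.coprime_iff_isRelPrime.1 ((Nat.coprime_primes h1 h2).2 hpq)
      · intro p hp
        exact (Nat.prime_of_mem_primeFactors (hs hp)).prime.squarefree
  · intro k hk
    simp only [Finset.mem_filter, Nat.mem_divisors] at hk
    exact Nat.prod_primeFactors_of_squarefree hk.2
  · intro s hs
    simp only [Finset.mem_powerset] at hs
    exact Nat.primeFactors_prod (fun p hp => Nat.prime_of_mem_primeFactors (hs hp))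
  · intro k hk
    rfl

lemma gmul_abs_le (h : ℕ → ℝ) (hh : ∀ p : ℕ, p.Prime → |h p| ≤ (p : ℝ) ^ (-(1 / 4) : ℝ)) (k : ℕ) :
    |gmul h k| ≤ (k : ℝ) ^ (-(1 / 4) : ℝ) := by
  unfold gmul
  split_ifs with hk
  · rw [Finset.abs_prod]
    refine (Finset.prod_le_prod (fun _ _ => abs_nonneg _)
      (fun p hp => hh p (Nat.prime_of_mem_primeFactors hp))).trans ?_
    rw [Real.finsetProd_rpow _ _ (fun _ _ => Nat.cast_nonneg _), ← Nat.cast_prod,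
      Nat.prod_primeFactors_of_squarefree hk]
  · simp only [abs_zero]; positivity

lemma gmul_summable (h : ℕ → ℝ) (hh : ∀ p : ℕ, p.Prime → |h p| ≤ (p : ℝ) ^ (-(1 / 4) : ℝ)) :
    Summable (fun k : ℕ => |gmul h k| / k) := by
  have : Summable (fun k : ℕ => (k : ℝ) ^ (-(5 / 4) : ℝ)) :=
    Real.summable_nat_rpow.2 (by norm_num)
  refine this.of_nonneg_of_le (fun k => by positivity) (fun k => ?_)
  rcases Nat.eq_zero_or_pos k with rfl | hk
  · simp
  · have hk' : (0 : ℝ) < k := by exact_mod_cast hk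
    rw [div_le_iff₀ hk']
    refine (gmul_abs_le h hh k).trans (le_of_eq ?_)
    rw [← Real.rpow_add_one hk'.ne']
    norm_num

lemma gmul_tsum (h : ℕ → ℝ) (hh : ∀ p : ℕ, p.Prime → |h p| ≤ (p : ℝ) ^ (-(1 / 4) : ℝ)) :
    ∑' k : ℕ, gmul h k / k = ∏' p : Nat.Primes, (1 + h p / p) := by
  have hs := gmul_summable h hh
  rw [← EulerProduct.eulerProduct_tprod (f := fun k : ℕ => gmul h k / k)]
  · congr 1
    ext p
    rw [tsum_eq_sum (s := Finset.range 2)]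
    · simp [Finset.sum_range_succ, gmul, p.2.prime.squarefree, p.2.primeFactors]
    · intro e he
      have : ¬ Squarefree ((p : ℕ) ^ e) := by
        rw [Finset.mem_range, not_lt] at he
        intro hsq
        have := (Nat.squarefree_pow_iff p.2.ne_one (by omega)).1 hsq
        omega
      simp [gmul, this]
  · simp [gmul]
  · intro m n hmn
    simp only [gmul, Nat.squarefree_mul hmn, hmn.primeFactors_mul]
    by_cases h1 : Squarefree m <;> by_cases h2 : Squarefree n <;> simp [h1, h2]
    rw [Finset.prod_union hmn.disjoint_primeFactors]
    ring
  · simpa [abs_div] using hs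
  · simp

lemma sum_divisors_swap (g : ℕ → ℝ) (n : ℕ) :
    ∑ x ∈ Finset.Icc 1 n, ∑ k ∈ x.divisors, g k
      = ∑ k ∈ Finset.Icc 1 n, g k * ((n / k : ℕ) : ℝ) := by
  have : ∀ x ∈ Finset.Icc 1 n, ∑ k ∈ x.divisors, g k
      = ∑ k ∈ Finset.Icc 1 n, if k ∣ x then g k else 0 := by
    intro x hx
    rw [← Finset.sum_filter]
    congr 1
    ext k
    simp only [Finset.mem_Icc] at hx
    simp only [Nat.mem_divisors, Finset.mem_filter, Finset.mem_Icc]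
    constructor
    · rintro ⟨h1, h2⟩
      exact ⟨⟨Nat.pos_of_dvd_of_pos h1 (by omega), (Nat.le_of_dvd (by omega) h1).trans hx.2⟩, h1⟩
    · rintro ⟨h1, h2⟩
      exact ⟨h2, by omega⟩
  rw [Finset.sum_congr rfl this, Finset.sum_comm]
  refine Finset.sum_congr rfl fun k hk => ?_
  rw [← Finset.sum_filter, Finset.sum_const, nsmul_eq_mul, mul_comm]
  congr 2
  rw [← Nat.Ioc_filter_dvd_card_eq_div]
  rfl

lemma floor_div_tendsto (k : ℕ) :
    Tendsto (fun n : ℕ => ((n / k : ℕ) : ℝ) / n) atTop (nhds (1 / k)) := by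
  have h := (tendsto_nat_floor_mul_div_atTop (R := ℝ) (a := 1 / k) (by positivity)).comp
    tendsto_natCast_atTop_atTop
  refine h.congr (fun n => ?_)
  simp only [Function.comp]
  rw [one_div_mul_eq_div, Nat.floor_div_natCast, Nat.floor_natCast]

lemma avg_tendsto (h : ℕ → ℝ) (hh : ∀ p : ℕ, p.Prime → |h p| ≤ (p : ℝ) ^ (-(1 / 4) : ℝ)) :
    Tendsto (fun n : ℕ => (∑ x ∈ Finset.Icc 1 n, ∏ p ∈ x.primeFactors, (1 + h p)) / n) atTop
      (nhds (∏' p : Nat.Primes, (1 + h p / p))) := by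
  rw [← gmul_tsum h hh]
  have key : ∀ n : ℕ, (∑ x ∈ Finset.Icc 1 n, ∏ p ∈ x.primeFactors, (1 + h p)) / n
      = ∑' k : ℕ, gmul h k * (((n / k : ℕ) : ℝ) / n) := by
    intro n
    rw [tsum_eq_sum (s := Finset.Icc 1 n)]
    · have : ∑ x ∈ Finset.Icc 1 n, ∏ p ∈ x.primeFactors, (1 + h p)
        = ∑ x ∈ Finset.Icc 1 n, ∑ k ∈ x.divisors, gmul h k := by
        refine Finset.sum_congr rfl fun x hx => (gmul_sum h ?_).symm
        simp only [Finset.mem_Icc] at hx; omega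
      rw [this, sum_divisors_swap, Finset.sum_div]
      refine Finset.sum_congr rfl fun k _ => ?_
      ring
    · intro k hk
      have : n / k = 0 := by
        simp only [Finset.mem_Icc, not_and, not_le] at hk
        rcases Nat.eq_zero_or_pos k with rfl | h0
        · simp
        · exact Nat.div_eq_of_lt (hk h0)
      simp [this]
  simp_rw [key]
  refine tendsto_tsum_of_dominated_convergence (gmul_summable h hh) (fun k => ?_)
    (Eventually.of_forall fun n k => ?_)
  · simpa [div_eq_mul_inv] using (floor_div_tendsto k).const_mul (gmul h k)
  · rw [norm_mul, Real.norm_eq_abs, Real.norm_eq_abs, abs_of_nonneg (by positivity : (0 : ℝ) ≤ ((n / k : ℕ) : ℝ) / n), div_eq_mul_inv (|gmul h k|)]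
    gcongr
    rcases Nat.eq_zero_or_pos n with rfl | hn
    · simp
    have hn' : (0 : ℝ) < n := by exact_mod_cast hn
    rw [div_le_iff₀ hn', inv_mul_eq_div]
    exact Nat.cast_div_le

lemma gmul_moebius (a : ℕ) (k : ℕ) :
    gmul (fun p => -(1 / (p : ℝ) ^ a)) k = (ArithmeticFunction.moebius k : ℝ) / (k : ℝ) ^ a := by
  unfold gmul
  split_ifs with hk
  · simp_rw [neg_eq_neg_one_mul (1 / _ : ℝ)]
    rw [Finset.prod_mul_distrib, Finset.prod_const,
      ArithmeticFunction.moebius_apply_of_squarefree hk]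
    rw [← (ArithmeticFunction.cardDistinctFactors_eq_cardFactors_iff_squarefree hk.ne_zero).2 hk]
    have hc : ArithmeticFunction.cardDistinctFactors k = k.primeFactors.card := rfl
    rw [hc]
    rw [Finset.prod_div_distrib, Finset.prod_pow, ← Nat.cast_prod,
      Nat.prod_primeFactors_of_squarefree hk]
    simp [div_eq_mul_inv]
  · simp [ArithmeticFunction.moebius_eq_zero_of_not_squarefree hk]


noncomputable def ff (e : ℕ) (x : ℕ) : ℝ := ∏ p ∈ x.primeFactors, (1 + -(1 / (p : ℝ) ^ (e + 1)))

noncomputable def cc (e n : ℕ) : ℝ :=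
  ∑ k ∈ Finset.Icc 1 n, (ArithmeticFunction.moebius k : ℝ) / (k : ℝ) ^ (e + 2)

noncomputable def hn (n : ℕ) : ℝ := ∑ k ∈ Finset.Icc 1 n, 1 / (k : ℝ)

lemma inv_pow_mem (e : ℕ) {p : ℕ} (hp : p.Prime) :
    0 ≤ 1 / (p : ℝ) ^ (e + 1) ∧ 1 / (p : ℝ) ^ (e + 1) ≤ 1 / p ∧ 1 / (p : ℝ) ≤ 1 / 2 := by
  have h2 : (2 : ℝ) ≤ p := by exact_mod_cast hp.two_le
  refine ⟨by positivity, ?_, ?_⟩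
  · apply one_div_le_one_div_of_le (by linarith)
    exact le_self_pow₀ (by linarith) (by omega)
  · exact one_div_le_one_div_of_le (by norm_num) h2

lemma ff_nonneg (e x : ℕ) : 0 ≤ ff e x := by
  refine Finset.prod_nonneg fun p hp => ?_
  have := inv_pow_mem e (Nat.prime_of_mem_primeFactors hp)
  linarith

lemma ff_le_one (e x : ℕ) : ff e x ≤ 1 := by
  refine Finset.prod_le_one (fun p hp => ?_) (fun p hp => ?_) <;>
  · have := inv_pow_mem e (Nat.prime_of_mem_primeFactors hp)
    linarith

lemma quarter_bound (p : ℕ) (hp : p.Prime) : 2 / (p : ℝ) - 1 / (p : ℝ) ^ 2 ≤ (p : ℝ) ^ (-(1 / 4) : ℝ) := by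
  have h2 : (2 : ℝ) ≤ p := by exact_mod_cast hp.two_le
  have hp0 : (0 : ℝ) < p := by linarith
  rw [Real.rpow_neg hp0.le]
  set r := (p : ℝ) ^ (1 / 4 : ℝ) with hr
  have hr4 : r ^ 4 = p := by
    rw [hr, ← Real.rpow_natCast, ← Real.rpow_mul hp0.le]; norm_num
  have hr0 : 0 < r := by positivity
  rw [← hr4, ← one_div, le_div_iff₀ hr0]
  rw [← hr4] at h2
  rcases hp.eq_two_or_odd with h | h
  · have : r ^ 4 = 2 := by rw [hr4, h]; norm_num
    rw [this]
    have : r ≤ 4 / 3 := by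
      by_contra! hcon
      have : (4 / 3 : ℝ) ^ 4 < r ^ 4 := by gcongr
      norm_num at this
      linarith
    linarith
  · have h3 : (3 : ℝ) ≤ r ^ 4 := by
      rw [hr4]
      have : 3 ≤ p := by
        have := hp.two_le
        omega
      exact_mod_cast this
    have hr3 : 2 ≤ r ^ 3 := by
      by_contra! hcon
      have : (r ^ 3) ^ 4 < 2 ^ 4 := by gcongr
      have h27 : (3 : ℝ) ^ 3 ≤ (r ^ 4) ^ 3 := by gcongr
      have e1 : (r ^ 3) ^ 4 = (r ^ 4) ^ 3 := by ring
      linarith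
    have : (2 / r ^ 4 - 1 / (r ^ 4) ^ 2) * r = (2 - 1 / r ^ 4) / r ^ 3 := by
      field_simp
    rw [this, div_le_one (by positivity)]
    have : 0 < 1 / r ^ 4 := by positivity
    linarith

lemma h1_bound (e : ℕ) : ∀ p : ℕ, p.Prime → |(-(1 / (p : ℝ) ^ (e + 1)))| ≤ (p : ℝ) ^ (-(1 / 4) : ℝ) := by
  intro p hp
  obtain ⟨a, b, c⟩ := inv_pow_mem e hp
  rw [abs_neg, abs_of_nonneg a]
  refine le_trans ?_ (quarter_bound p hp)
  have : 1 / (p : ℝ) ^ 2 = (1 / p) * (1 / p) := by ring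
  have h3 : 2 / (p : ℝ) = 2 * (1 / p) := by ring
  rw [this, h3]
  nlinarith

noncomputable def hh2 (e : ℕ) (p : ℕ) : ℝ := -2 / (p : ℝ) ^ (e + 1) + 1 / (p : ℝ) ^ (2 * e + 2)

lemma h2_bound (e : ℕ) : ∀ p : ℕ, p.Prime → |hh2 e p| ≤ (p : ℝ) ^ (-(1 / 4) : ℝ) := by
  intro p hp
  obtain ⟨a, b, c⟩ := inv_pow_mem e hp
  refine le_trans ?_ (quarter_bound p hp)
  have e1 : hh2 e p = -2 * (1 / (p : ℝ) ^ (e + 1)) + (1 / (p : ℝ) ^ (e + 1)) ^ 2 := by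
    unfold hh2
    rw [div_pow, ← pow_mul]
    ring_nf
  have e2 : 2 / (p : ℝ) - 1 / (p : ℝ) ^ 2 = 2 * (1 / p) - (1 / (p : ℝ)) ^ 2 := by ring
  rw [e1, e2, abs_le]
  constructor <;> nlinarith

lemma avg_ff (e : ℕ) : Tendsto (fun n : ℕ => (∑ x ∈ Finset.Icc 1 n, ff e x) / n) atTop
    (nhds (∏' p : Nat.Primes, (1 - 1 / (p : ℝ) ^ (e + 2)))) := by
  have := avg_tendsto _ (h1_bound e)
  convert! this using 4 with p
  rw [pow_succ _ (e + 1)]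
  ring

lemma avg_ff2 (e : ℕ) : Tendsto (fun n : ℕ => (∑ x ∈ Finset.Icc 1 n, ff e x ^ 2) / n) atTop
    (nhds (∏' p : Nat.Primes, (1 - 2 / (p : ℝ) ^ (e + 2) + 1 / (p : ℝ) ^ (2 * e + 3)))) := by
  have := avg_tendsto _ (h2_bound e)
  have e1 : (fun p : Nat.Primes => 1 - 2 / (p : ℝ) ^ (e + 2) + 1 / (p : ℝ) ^ (2 * e + 3))
      = fun p : Nat.Primes => 1 + hh2 e p / p := by
    funext p
    unfold hh2
    have hp0 : (p : ℝ) ≠ 0 := by exact_mod_cast p.2.ne_zero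
    field_simp
    ring
  rw [e1]
  refine this.congr fun n => ?_
  congr 1
  refine Finset.sum_congr rfl fun x _ => ?_
  unfold ff hh2
  rw [← Finset.prod_pow]
  refine Finset.prod_congr rfl fun p _ => ?_
  ring

lemma ff_eq (e : ℕ) {n x : ℕ} (hx : x ∈ Finset.Icc 1 n) :
    ff e x = ∑ k ∈ Finset.Icc 1 n,
      (ArithmeticFunction.moebius k : ℝ) / (k : ℝ) ^ (e + 1) * (if k ∣ x then 1 else 0) := by
  simp only [Finset.mem_Icc] at hx
  have h := gmul_sum (fun p => -(1 / (p : ℝ) ^ (e + 1))) (x := x) (by omega)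
  simp_rw [gmul_moebius] at h
  unfold ff
  rw [← h]
  simp_rw [mul_ite, mul_one, mul_zero]
  rw [← Finset.sum_filter]
  congr 1
  ext k
  simp only [Nat.mem_divisors, Finset.mem_filter, Finset.mem_Icc]
  constructor
  · rintro ⟨h1, h2⟩
    exact ⟨⟨Nat.pos_of_dvd_of_pos h1 (by omega), (Nat.le_of_dvd (by omega) h1).trans hx.2⟩, h1⟩
  · rintro ⟨h1, h2⟩
    exact ⟨h2, by omega⟩

lemma floor_err (n k : ℕ) (hn : 0 < n) (hk : 0 < k) :
    |((n / k : ℕ) : ℝ) / n - 1 / k| ≤ 1 / n := by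
  have hn' : (0 : ℝ) < n := by exact_mod_cast hn
  have hk' : (0 : ℝ) < k := by exact_mod_cast hk
  have h1 : ((n / k : ℕ) : ℝ) ≤ n / k := Nat.cast_div_le
  have h2 : (n : ℝ) / k < (n / k : ℕ) + 1 := by
    rw [div_lt_iff₀ hk']
    have := Nat.lt_mul_div_succ n hk
    rw [mul_comm] at this
    exact_mod_cast this
  have e1 : ((n / k : ℕ) : ℝ) / n - 1 / k = (((n / k : ℕ) : ℝ) - n / k) / n := by
    field_simp
  rw [e1, abs_div, abs_of_pos hn']
  gcongr
  rw [abs_le]; constructor <;> linarith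

lemma moebius_abs_le (k : ℕ) : |(ArithmeticFunction.moebius k : ℝ)| ≤ 1 := by
  exact_mod_cast ArithmeticFunction.abs_moebius_le_one (n := k)

lemma mean_err (e n : ℕ) (hn0 : 0 < n) :
    |(∑ x ∈ Finset.Icc 1 n, ff e x) / n - cc e n| ≤ hn n / n := by
  have h1 : ∑ x ∈ Finset.Icc 1 n, ff e x = ∑ k ∈ Finset.Icc 1 n,
      (ArithmeticFunction.moebius k : ℝ) / (k : ℝ) ^ (e + 1) * ((n / k : ℕ) : ℝ) := by
    rw [← sum_divisors_swap]
    refine Finset.sum_congr rfl fun x hx => ?_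
    simp only [Finset.mem_Icc] at hx
    have h := gmul_sum (fun p => -(1 / (p : ℝ) ^ (e + 1))) (x := x) (by omega)
    simp_rw [gmul_moebius] at h
    exact h.symm
  rw [h1, cc, hn, Finset.sum_div, ← Finset.sum_sub_distrib, Finset.sum_div]
  refine (Finset.abs_sum_le_sum_abs _ _).trans (Finset.sum_le_sum fun k hk => ?_)
  simp only [Finset.mem_Icc] at hk
  have hk1 : (1 : ℝ) ≤ k := by exact_mod_cast hk.1
  have e1 : (ArithmeticFunction.moebius k : ℝ) / (k : ℝ) ^ (e + 1) * ((n / k : ℕ) : ℝ) / n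
      - (ArithmeticFunction.moebius k : ℝ) / (k : ℝ) ^ (e + 2)
      = (ArithmeticFunction.moebius k : ℝ) * (1 / (k : ℝ) ^ (e + 1)) *
        (((n / k : ℕ) : ℝ) / n - 1 / k) := by
    rw [pow_succ _ (e + 1)]; field_simp
  rw [e1, abs_mul, abs_mul, div_eq_mul_one_div (1 / (k : ℝ))]
  refine mul_le_mul ?_ (floor_err n k hn0 hk.1) (abs_nonneg _) (by positivity)
  rw [abs_of_nonneg (by positivity : 0 ≤ 1 / (k : ℝ) ^ (e + 1))]
  have : 1 / (k : ℝ) ^ (e + 1) ≤ 1 / k :=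
    one_div_le_one_div_of_le (by linarith) (le_self_pow₀ hk1 (by omega))
  calc _ ≤ 1 * (1 / (k : ℝ) ^ (e + 1)) := by
        gcongr; exact moebius_abs_le k
    _ ≤ _ := by linarith

lemma cc_tendsto (e : ℕ) : Tendsto (fun n => cc e n) atTop
    (nhds (∏' p : Nat.Primes, (1 - 1 / (p : ℝ) ^ (e + 2)))) := by
  have h := gmul_tsum _ (h1_bound e)
  have hs := gmul_summable _ (h1_bound e)
  have hs' : Summable (fun k : ℕ => gmul (fun p => -(1 / (p : ℝ) ^ (e + 1))) k / k) := by
    refine Summable.of_norm ?_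
    simpa [abs_div] using hs
  have ht := hs'.hasSum.tendsto_sum_nat.comp (tendsto_add_atTop_nat 1)
  rw [h] at ht
  have e1 : (fun p : Nat.Primes => 1 - 1 / (p : ℝ) ^ (e + 2))
      = fun p : Nat.Primes => 1 + -(1 / (p : ℝ) ^ (e + 1)) / p := by
    funext p
    rw [pow_succ _ (e + 1)]
    ring
  rw [e1]
  refine ht.congr fun n => ?_
  simp only [Function.comp, cc]
  rw [Finset.range_eq_Ico, Finset.sum_eq_sum_Ico_succ_bot (by omega)]
  simp only [gmul_moebius, Nat.cast_zero, div_zero, zero_add]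
  refine Finset.sum_congr rfl fun k _ => ?_
  rw [pow_succ _ (e + 1), div_div]

lemma cc_err (e n : ℕ) (hn0 : 0 < n) :
    |cc e n - ∏' p : Nat.Primes, (1 - 1 / (p : ℝ) ^ (e + 2))| ≤ 2 / n := by
  have ht : Tendsto (fun N => |cc e n - cc e N|) atTop
      (nhds |cc e n - ∏' p : Nat.Primes, (1 - 1 / (p : ℝ) ^ (e + 2))|) :=
    ((tendsto_const_nhds).sub (cc_tendsto e)).abs
  refine le_of_tendsto ht ?_
  filter_upwards [eventually_ge_atTop n] with N hN
  have : cc e N - cc e n = ∑ k ∈ Finset.Ioo n (N + 1), (ArithmeticFunction.moebius k : ℝ) / (k : ℝ) ^ (e + 2) := by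
    unfold cc
    rw [sub_eq_iff_eq_add', ← Finset.sum_union]
    · congr 1
      ext k; simp only [Finset.mem_union, Finset.mem_Icc, Finset.mem_Ioo]; omega
    · rw [Finset.disjoint_left]
      intro k; simp only [Finset.mem_Icc, Finset.mem_Ioo]; omega
  rw [abs_sub_comm, this]
  refine (Finset.abs_sum_le_sum_abs _ _).trans ?_
  have hle : ∑ k ∈ Finset.Ioo n (N + 1), |(ArithmeticFunction.moebius k : ℝ) / (k : ℝ) ^ (e + 2)|
      ≤ ∑ k ∈ Finset.Ioo n (N + 1), ((k : ℝ) ^ 2)⁻¹ := by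
    refine Finset.sum_le_sum fun k hk => ?_
    simp only [Finset.mem_Ioo] at hk
    have hk1 : (1 : ℝ) ≤ k := by exact_mod_cast (by omega : 1 ≤ k)
    rw [abs_div, abs_of_nonneg (by positivity : (0 : ℝ) ≤ (k : ℝ) ^ (e + 2)), ← one_div]
    have := moebius_abs_le k
    gcongr
    omega
  refine hle.trans ((sum_Ioo_inv_sq_le n (N + 1)).trans ?_)
  have : (0 : ℝ) < n := by exact_mod_cast hn0
  gcongr
  linarith

lemma hn_le (n : ℕ) : hn n ≤ 1 + Real.log n := by
  have := harmonic_le_one_add_log n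
  rw [harmonic_eq_sum_Icc] at this
  push_cast at this
  simpa [hn] using this

lemma hn_nonneg (n : ℕ) : 0 ≤ hn n := Finset.sum_nonneg fun _ _ => by positivity

lemma hn_sqrt : Tendsto (fun n : ℕ => hn n / √(n : ℝ)) atTop (nhds 0) := by
  have h1 : Tendsto (fun x : ℝ => (1 + Real.log x) / √x) atTop (nhds 0) := by
    have ha : Tendsto (fun x : ℝ => 1 / √x) atTop (nhds 0) := by
      simpa [Function.comp_def] using tendsto_inv_atTop_zero.comp Real.tendsto_sqrt_atTop
    have hb : Tendsto (fun x : ℝ => Real.log x / √x) atTop (nhds 0) := by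
      have := (isLittleO_log_rpow_atTop (r := 1 / 2) (by norm_num)).tendsto_div_nhds_zero
      simpa [Real.sqrt_eq_rpow] using this
    simpa [add_div] using ha.add hb
  refine squeeze_zero (fun n => div_nonneg (hn_nonneg n) (Real.sqrt_nonneg _)) (fun n => ?_)
    (h1.comp tendsto_natCast_atTop_atTop)
  simp only [Function.comp]
  gcongr
  exact hn_le n

lemma cc_abs_le (e n : ℕ) : |cc e n| ≤ 2 := by
  unfold cc
  refine (Finset.abs_sum_le_sum_abs _ _).trans ?_
  have hle : ∑ k ∈ Finset.Icc 1 n, |(ArithmeticFunction.moebius k : ℝ) / (k : ℝ) ^ (e + 2)|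
      ≤ ∑ k ∈ Finset.Ioo 0 (n + 1), ((k : ℝ) ^ 2)⁻¹ := by
    have : Finset.Icc 1 n = Finset.Ioo 0 (n + 1) := by
      ext k; simp only [Finset.mem_Icc, Finset.mem_Ioo]; omega
    rw [this]
    refine Finset.sum_le_sum fun k hk => ?_
    simp only [Finset.mem_Ioo] at hk
    have hk1 : (1 : ℝ) ≤ k := by exact_mod_cast (by omega : 1 ≤ k)
    rw [abs_div, abs_of_nonneg (by positivity : (0 : ℝ) ≤ (k : ℝ) ^ (e + 2)), ← one_div]
    have := moebius_abs_le k
    gcongr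
    omega
  refine hle.trans ((sum_Ioo_inv_sq_le 0 (n + 1)).trans ?_)
  norm_num

lemma taylor_rem (e : ℕ) (z a N : ℝ) (hz0 : 0 ≤ z) (hz : z ≤ N) (ha0 : 0 ≤ a) (ha : a ≤ N) :
    |z ^ (e + 2) - a ^ (e + 2) - (e + 2) * a ^ (e + 1) * (z - a)|
      ≤ (e + 2) ^ 2 * N ^ e * (z - a) ^ 2 := by
  induction e with
  | zero =>
    have : z ^ (0 + 2) - a ^ (0 + 2) - ((0 : ℕ) + 2) * a ^ (0 + 1) * (z - a) = (z - a) ^ 2 := by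
      push_cast; ring
    rw [this, abs_of_nonneg (sq_nonneg _)]
    push_cast
    nlinarith [sq_nonneg (z - a)]
  | succ e ih =>
    have e1 : z ^ (e + 1 + 2) - a ^ (e + 1 + 2) - ((e + 1 : ℕ) + 2) * a ^ (e + 1 + 1) * (z - a)
      = z * (z ^ (e + 2) - a ^ (e + 2) - (e + 2) * a ^ (e + 1) * (z - a))
        + (e + 2) * a ^ (e + 1) * (z - a) ^ 2 := by
      push_cast; ring
    rw [e1]
    refine (abs_add_le _ _).trans ?_
    rw [abs_mul, abs_of_nonneg hz0,
      abs_of_nonneg (by positivity : 0 ≤ (e + 2) * a ^ (e + 1) * (z - a) ^ 2)]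
    have hN : 0 ≤ N := hz0.trans hz
    have s1 : z * |z ^ (e + 2) - a ^ (e + 2) - (e + 2) * a ^ (e + 1) * (z - a)|
      ≤ N * ((e + 2) ^ 2 * N ^ e * (z - a) ^ 2) := by gcongr
    have s2 : (e + 2) * a ^ (e + 1) * (z - a) ^ 2 ≤ (e + 2) * N ^ (e + 1) * (z - a) ^ 2 := by gcongr
    refine (add_le_add s1 s2).trans ?_
    have : N * ((e + 2) ^ 2 * N ^ e * (z - a) ^ 2) + (e + 2) * N ^ (e + 1) * (z - a) ^ 2
      = ((e + 2) ^ 2 + (e + 2)) * (N ^ (e + 1) * (z - a) ^ 2) := by ring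
    rw [this, mul_assoc]
    gcongr
    push_cast
    nlinarith


lemma clt_core (e : ℕ) (t : ℝ) (s2 : ℝ)
    (hs2 : s2 = ∏' p : Nat.Primes, (1 - 2 / (p : ℝ) ^ (e + 2) + 1 / (p : ℝ) ^ (2 * e + 3))
      - (∏' p : Nat.Primes, (1 - 1 / (p : ℝ) ^ (e + 2))) ^ 2) :
    Tendsto (fun n : ℕ => ∑ x ∈ Finset.Icc 1 n,
      (Complex.exp (Complex.I * ((t / √(n : ℝ) * (ff e x - cc e n) : ℝ) : ℂ)) - 1)) atTop
      (nhds (-((s2 * t ^ 2 / 2 : ℝ) : ℂ))) := by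
  set P := ∏' p : Nat.Primes, (1 - 1 / (p : ℝ) ^ (e + 2)) with hP
  set V := ∏' p : Nat.Primes, (1 - 2 / (p : ℝ) ^ (e + 2) + 1 / (p : ℝ) ^ (2 * e + 3)) with hV
  have ha : Tendsto (fun n : ℕ => t / √(n : ℝ) * ∑ x ∈ Finset.Icc 1 n, (ff e x - cc e n)) atTop
      (nhds 0) := by
    have hb : Tendsto (fun n : ℕ => |t| * (hn n / √(n : ℝ))) atTop (nhds 0) := by
      simpa using hn_sqrt.const_mul |t|
    refine squeeze_zero_norm' ?_ hb
    filter_upwards [eventually_gt_atTop 0] with n hn0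
    have hn' : (0 : ℝ) < n := by exact_mod_cast hn0
    have h := mean_err e n hn0
    have e1 : ∑ x ∈ Finset.Icc 1 n, (ff e x - cc e n)
        = n * ((∑ x ∈ Finset.Icc 1 n, ff e x) / n - cc e n) := by
      rw [Finset.sum_sub_distrib]
      simp
      field_simp
    have h2 : |∑ x ∈ Finset.Icc 1 n, (ff e x - cc e n)| ≤ hn n := by
      rw [e1, abs_mul, abs_of_pos hn']
      calc _ ≤ n * (hn n / n) := by gcongr
        _ = hn n := by field_simp
    rw [Real.norm_eq_abs, abs_mul, abs_div, abs_of_nonneg (Real.sqrt_nonneg _)]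
    calc _ ≤ |t| / √(n : ℝ) * hn n := by gcongr
      _ = _ := by ring
  have hb : Tendsto (fun n : ℕ => (t / √(n : ℝ)) ^ 2 * ∑ x ∈ Finset.Icc 1 n, (ff e x - cc e n) ^ 2) atTop
      (nhds (s2 * t ^ 2)) := by
    have h1 := ((avg_ff2 e).sub ((((cc_tendsto e).const_mul 2).mul (avg_ff e)))).add
      ((cc_tendsto e).pow 2)
    have h2 := h1.const_mul (t ^ 2)
    rw [← hP, ← hV] at h2
    have e0 : t ^ 2 * (V - 2 * P * P + P ^ 2) = s2 * t ^ 2 := by rw [hs2]; ring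
    rw [e0] at h2
    refine h2.congr' ?_
    filter_upwards [eventually_gt_atTop 0] with n hn0
    have hn' : (0 : ℝ) < n := by exact_mod_cast hn0
    rw [div_pow, Real.sq_sqrt hn'.le]
    have e1 : ∑ x ∈ Finset.Icc 1 n, (ff e x - cc e n) ^ 2
        = ∑ x ∈ Finset.Icc 1 n, ff e x ^ 2 - 2 * cc e n * ∑ x ∈ Finset.Icc 1 n, ff e x
          + n * cc e n ^ 2 := by
      simp_rw [sub_sq]
      rw [Finset.sum_add_distrib, Finset.sum_sub_distrib, Finset.mul_sum]
      simp only [Finset.sum_const, Nat.card_Icc, add_tsub_cancel_right, nsmul_eq_mul]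
      congr 2
      refine Finset.sum_congr rfl fun x _ => ?_
      ring
    rw [e1]
    field_simp
  have hab : Tendsto (fun n : ℕ =>
      Complex.I * ((t / √(n : ℝ) * ∑ x ∈ Finset.Icc 1 n, (ff e x - cc e n) : ℝ) : ℂ)
      - (((t / √(n : ℝ)) ^ 2 * ∑ x ∈ Finset.Icc 1 n, (ff e x - cc e n) ^ 2 : ℝ) : ℂ) / 2) atTop
      (nhds (-((s2 * t ^ 2 / 2 : ℝ) : ℂ))) := by
    have h1 := ((Complex.continuous_ofReal.tendsto _).comp ha).const_mul Complex.I
    have h2 := ((Complex.continuous_ofReal.tendsto _).comp hb).div_const 2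
    have h3 := h1.sub h2
    have e0 : -((s2 * t ^ 2 / 2 : ℝ) : ℂ) = Complex.I * ((0 : ℝ) : ℂ) - ((s2 * t ^ 2 : ℝ) : ℂ) / 2 := by
      push_cast
      ring
    rw [e0]
    exact h3
  have hr : Tendsto (fun n : ℕ => 27 * |t| ^ 3 * Real.exp (3 * |t|) * (1 / √(n : ℝ))) atTop (nhds 0) := by
    have : Tendsto (fun n : ℕ => 1 / √(n : ℝ)) atTop (nhds 0) := by
      simpa [Function.comp_def] using
        (tendsto_inv_atTop_zero.comp Real.tendsto_sqrt_atTop).comp (tendsto_natCast_atTop_atTop (R := ℝ))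
    simpa using this.const_mul (27 * |t| ^ 3 * Real.exp (3 * |t|))
  have hdiff : Tendsto (fun n : ℕ => ∑ x ∈ Finset.Icc 1 n,
      (Complex.exp (Complex.I * ((t / √(n : ℝ) * (ff e x - cc e n) : ℝ) : ℂ)) - 1) -
      (Complex.I * ((t / √(n : ℝ) * ∑ x ∈ Finset.Icc 1 n, (ff e x - cc e n) : ℝ) : ℂ)
      - (((t / √(n : ℝ)) ^ 2 * ∑ x ∈ Finset.Icc 1 n, (ff e x - cc e n) ^ 2 : ℝ) : ℂ) / 2)) atTop
      (nhds 0) := by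
    refine squeeze_zero_norm' ?_ hr
    filter_upwards [eventually_gt_atTop 0] with n hn0
    have hn' : (1 : ℝ) ≤ n := by exact_mod_cast hn0
    have hsq : 1 ≤ √(n : ℝ) := Real.one_le_sqrt.2 hn'
    have e1 : ∑ x ∈ Finset.Icc 1 n,
      (Complex.exp (Complex.I * ((t / √(n : ℝ) * (ff e x - cc e n) : ℝ) : ℂ)) - 1) -
      (Complex.I * ((t / √(n : ℝ) * ∑ x ∈ Finset.Icc 1 n, (ff e x - cc e n) : ℝ) : ℂ)
      - (((t / √(n : ℝ)) ^ 2 * ∑ x ∈ Finset.Icc 1 n, (ff e x - cc e n) ^ 2 : ℝ) : ℂ) / 2)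
      = ∑ x ∈ Finset.Icc 1 n,
        (Complex.exp (Complex.I * ((t / √(n : ℝ) * (ff e x - cc e n) : ℝ) : ℂ)) -
          ∑ m ∈ Finset.range 3, (Complex.I * ((t / √(n : ℝ) * (ff e x - cc e n) : ℝ) : ℂ)) ^ m
            / (m.factorial : ℂ)) := by
      push_cast
      rw [Finset.mul_sum, Finset.mul_sum, Finset.mul_sum, Finset.sum_div, ← Finset.sum_sub_distrib,
        ← Finset.sum_sub_distrib]
      refine Finset.sum_congr rfl fun x _ => ?_
      simp only [Finset.sum_range_succ, Finset.sum_range_zero, Nat.factorial]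
      push_cast
      have hI := Complex.I_sq
      linear_combination ((1 / 2 : ℂ) * ((t : ℂ) / ((√(n : ℝ) : ℝ) : ℂ) * ((ff e x : ℂ) - (cc e n : ℂ))) ^ 2) * hI
    rw [e1]
    refine (norm_sum_le _ _).trans ?_
    have hx : ∀ x ∈ Finset.Icc 1 n,
        ‖(Complex.exp (Complex.I * ((t / √(n : ℝ) * (ff e x - cc e n) : ℝ) : ℂ)) -
          ∑ m ∈ Finset.range 3, (Complex.I * ((t / √(n : ℝ) * (ff e x - cc e n) : ℝ) : ℂ)) ^ m
            / (m.factorial : ℂ))‖ ≤ (|t| / √(n : ℝ) * 3) ^ 3 * Real.exp (3 * |t|) := by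
      intro x _
      refine (Complex.norm_exp_sub_sum_le_norm_mul_exp _ 3).trans ?_
      have hy : |ff e x - cc e n| ≤ 3 := by
        have h1 := ff_nonneg e x
        have h2 := ff_le_one e x
        have h3 := abs_le.1 (cc_abs_le e n)
        rw [abs_le]; constructor <;> linarith
      have e2 : ‖Complex.I * ((t / √(n : ℝ) * (ff e x - cc e n) : ℝ) : ℂ)‖
          ≤ |t| / √(n : ℝ) * 3 := by
        rw [norm_mul, Complex.norm_I, one_mul, Complex.norm_real, Real.norm_eq_abs, abs_mul, abs_div,
          abs_of_nonneg (Real.sqrt_nonneg _)]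
        gcongr
      have e3 : |t| / √(n : ℝ) * 3 ≤ 3 * |t| := by
        have : |t| / √(n : ℝ) ≤ |t| := div_le_self (abs_nonneg _) hsq
        linarith
      gcongr
      exact e2.trans e3
    refine (Finset.sum_le_sum hx).trans (le_of_eq ?_)
    simp only [Finset.sum_const, Nat.card_Icc, add_tsub_cancel_right, nsmul_eq_mul]
    have e4 : (n : ℝ) = √(n : ℝ) ^ 2 := (Real.sq_sqrt (by linarith)).symm
    have hs0 : √(n : ℝ) ≠ 0 := by linarith
    generalize √(n : ℝ) = r at *
    rw [e4]
    field_simp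
    ring
  have := hdiff.add hab
  simpa using this

noncomputable def zz (n k : ℕ) (ω : Fin n → ℕ) : ℝ := ∑ i, if k ∣ ω i then (1 : ℝ) else 0

lemma moeb_sum {n g : ℕ} (hg : g ∈ Finset.Icc 1 n) :
    (if g = 1 then (1 : ℝ) else 0)
      = ∑ k ∈ Finset.Icc 1 n, (ArithmeticFunction.moebius k : ℝ) * (if k ∣ g then 1 else 0) := by
  simp only [Finset.mem_Icc] at hg
  have h := gmul_sum (fun p => -(1 / (p : ℝ) ^ 0)) (x := g) (by omega)
  simp_rw [gmul_moebius] at h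
  have h1 : ∏ p ∈ g.primeFactors, (1 + -(1 / (p : ℝ) ^ 0)) = if g = 1 then (1 : ℝ) else 0 := by
    split_ifs with h1
    · simp [h1]
    · obtain ⟨p, hp⟩ := Nat.nonempty_primeFactors.2 (by omega : 1 < g)
      exact Finset.prod_eq_zero hp (by simp)
  rw [← h1, ← h]
  simp_rw [mul_ite, mul_one, mul_zero]
  rw [← Finset.sum_filter]
  have h2 : Finset.filter (fun k => k ∣ g) (Finset.Icc 1 n) = g.divisors := by
    ext k
    simp only [Nat.mem_divisors, Finset.mem_filter, Finset.mem_Icc]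
    constructor
    · rintro ⟨h1, h2⟩
      exact ⟨h2, by omega⟩
    · rintro ⟨h1, h2⟩
      exact ⟨⟨Nat.pos_of_dvd_of_pos h1 (by omega), (Nat.le_of_dvd (by omega) h1).trans hg.2⟩, h1⟩
  rw [h2]
  simp

lemma count_eq (e n : ℕ) (ω : Fin n → ℕ) (hω : ∀ i, ω i ∈ Finset.Icc 1 n) :
    (∑ i : Fin (e + 2) → Fin n,
      if Finset.univ.gcd (fun t : Fin (e + 2) => ω (i t)) = 1 then (1 : ℝ) else 0)
    = ∑ k ∈ Finset.Icc 1 n, (ArithmeticFunction.moebius k : ℝ) * zz n k ω ^ (e + 2) := by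
  unfold zz
  simp_rw [Fintype.sum_pow, Finset.mul_sum]
  rw [Finset.sum_comm]
  refine Finset.sum_congr rfl fun i _ => ?_
  have hg : Finset.univ.gcd (fun t : Fin (e + 2) => ω (i t)) ∈ Finset.Icc 1 n := by
    have hd : Finset.univ.gcd (fun t : Fin (e + 2) => ω (i t)) ∣ ω (i 0) :=
      Finset.gcd_dvd (f := fun t : Fin (e + 2) => ω (i t)) (Finset.mem_univ 0)
    have := hω (i 0)
    simp only [Finset.mem_Icc] at this ⊢
    exact ⟨Nat.pos_of_dvd_of_pos hd (by omega), (Nat.le_of_dvd (by omega) hd).trans this.2⟩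
  rw [moeb_sum hg]
  refine Finset.sum_congr rfl fun k _ => ?_
  rw [Finset.prod_boole]
  congr 1
  split_ifs with h1 h2 h2
  · rfl
  · exact absurd (Finset.dvd_gcd_iff.1 h1) h2
  · exact absurd (Finset.dvd_gcd_iff.2 h2) h1
  · rfl

lemma zz_nonneg (n k : ℕ) (ω : Fin n → ℕ) : 0 ≤ zz n k ω :=
  Finset.sum_nonneg fun _ _ => by split_ifs <;> norm_num

lemma zz_le (n k : ℕ) (ω : Fin n → ℕ) : zz n k ω ≤ n := by
  unfold zz
  calc _ ≤ ∑ i : Fin n, (1 : ℝ) := Finset.sum_le_sum fun _ _ => by split_ifs <;> norm_num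
    _ = n := by simp

lemma decomp (e n : ℕ) (hn0 : 0 < n) (ω : Fin n → ℕ) (hω : ∀ i, ω i ∈ Finset.Icc 1 n) (P : ℝ)
    (hP : P = ∏' p : Nat.Primes, (1 - 1 / (p : ℝ) ^ (e + 2))) :
    |((∑ i : Fin (e + 2) → Fin n,
      if Finset.univ.gcd (fun t : Fin (e + 2) => ω (i t)) = 1 then (1 : ℝ) else 0)
      - (n : ℝ) ^ (e + 2) * P) - (e + 2) * (n : ℝ) ^ (e + 1) * ∑ i, (ff e (ω i) - cc e n)|
    ≤ 2 * (n : ℝ) ^ (e + 1)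
      + (e + 2) ^ 2 * (n : ℝ) ^ e * ∑ k ∈ Finset.Icc 1 n, (zz n k ω - n / k) ^ 2 := by
  have hn' : (0 : ℝ) < n := by exact_mod_cast hn0
  rw [count_eq e n ω hω]
  have e1 : ∑ i, ff e (ω i) = ∑ k ∈ Finset.Icc 1 n,
      (ArithmeticFunction.moebius k : ℝ) / (k : ℝ) ^ (e + 1) * zz n k ω := by
    unfold zz
    simp_rw [Finset.mul_sum]
    rw [Finset.sum_comm]
    exact Finset.sum_congr rfl fun i _ => ff_eq e (hω i)
  have e2 : (∑ k ∈ Finset.Icc 1 n, (ArithmeticFunction.moebius k : ℝ) * zz n k ω ^ (e + 2)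
      - (n : ℝ) ^ (e + 2) * P) - (e + 2) * (n : ℝ) ^ (e + 1) * ∑ i, (ff e (ω i) - cc e n)
      = (n : ℝ) ^ (e + 2) * (cc e n - P) + ∑ k ∈ Finset.Icc 1 n,
        (ArithmeticFunction.moebius k : ℝ) * (zz n k ω ^ (e + 2) - (n / k : ℝ) ^ (e + 2)
          - (e + 2) * (n / k : ℝ) ^ (e + 1) * (zz n k ω - n / k)) := by
    have e3 : ∑ k ∈ Finset.Icc 1 n,
        (ArithmeticFunction.moebius k : ℝ) * (zz n k ω ^ (e + 2) - (n / k : ℝ) ^ (e + 2)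
          - (e + 2) * (n / k : ℝ) ^ (e + 1) * (zz n k ω - n / k))
        = ∑ k ∈ Finset.Icc 1 n, (ArithmeticFunction.moebius k : ℝ) * zz n k ω ^ (e + 2)
          - (n : ℝ) ^ (e + 2) * cc e n
          - (e + 2) * (n : ℝ) ^ (e + 1) * (∑ k ∈ Finset.Icc 1 n,
            (ArithmeticFunction.moebius k : ℝ) / (k : ℝ) ^ (e + 1) * zz n k ω - n * cc e n) := by
      unfold cc
      rw [Finset.mul_sum, Finset.mul_sum, ← Finset.sum_sub_distrib, ← Finset.sum_sub_distrib,
        Finset.mul_sum, ← Finset.sum_sub_distrib]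
      refine Finset.sum_congr rfl fun k hk => ?_
      rw [div_pow, div_pow]
      ring
    rw [e3, Finset.sum_sub_distrib, e1]
    simp only [Finset.sum_const, Finset.card_univ, Fintype.card_fin, nsmul_eq_mul]
    ring
  rw [e2]
  refine (abs_add_le _ _).trans (add_le_add ?_ ?_)
  · rw [abs_mul, abs_of_nonneg (by positivity : (0 : ℝ) ≤ (n : ℝ) ^ (e + 2))]
    have := cc_err e n hn0
    rw [← hP] at this
    calc _ ≤ (n : ℝ) ^ (e + 2) * (2 / n) := by gcongr
      _ = _ := by
        field_simp
        ring
  · rw [Finset.mul_sum]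
    refine (Finset.abs_sum_le_sum_abs _ _).trans (Finset.sum_le_sum fun k hk => ?_)
    simp only [Finset.mem_Icc] at hk
    have hk1 : (1 : ℝ) ≤ k := by exact_mod_cast hk.1
    rw [abs_mul]
    have := taylor_rem e (zz n k ω) (n / k) n (zz_nonneg _ _ _) (zz_le _ _ _) (by positivity)
      (div_le_self hn'.le hk1)
    have h2 := moebius_abs_le k
    calc _ ≤ 1 * |zz n k ω ^ (e + 2) - (n / k : ℝ) ^ (e + 2)
          - (e + 2) * (n / k : ℝ) ^ (e + 1) * (zz n k ω - n / k)| := by gcongr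
      _ ≤ _ := by rw [one_mul]; exact this


lemma unif_prob (n : ℕ) (h : 0 < n) : IsProbabilityMeasure (uniformOn (Set.Icc 1 n)) :=
  isProbabilityMeasure_uniformOn (Set.finite_Icc 1 n) ⟨1, by simp; omega⟩

instance unifVec_prob (n : ℕ) : IsProbabilityMeasure (unifVec n) := by
  unfold unifVec
  rcases Nat.eq_zero_or_pos n with rfl | h
  · constructor
    rw [Measure.pi_of_empty]
    simp
  · have := unif_prob n h
    infer_instance

lemma integral_unif {E : Type*} [NormedAddCommGroup E] [NormedSpace ℝ E] [CompleteSpace E]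
    (n : ℕ) (g : ℕ → E) :
    ∫ x, g x ∂(uniformOn (Set.Icc 1 n)) = (n : ℝ)⁻¹ • ∑ x ∈ Finset.Icc 1 n, g x := by
  unfold uniformOn
  rw [ProbabilityTheory.cond, integral_smul_measure, ← Finset.coe_Icc, setIntegral_finset]
  · rw [Measure.count_apply_finset]
    simp [Measure.real]
  · rw [← (Finset.Icc 1 n : Set ℕ).biUnion_of_singleton]
    refine integrableOn_finset_iUnion.2 fun x _ => integrableOn_singleton (by finiteness) ?_
    simp

lemma ae_mem (n : ℕ) : ∀ᵐ ω ∂(unifVec n), ∀ i, ω i ∈ Finset.Icc 1 n := by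
  rcases Nat.eq_zero_or_pos n with rfl | h
  · exact Eventually.of_forall fun ω i => i.elim0
  have := unif_prob n h
  rw [ae_all_iff]
  intro i
  have h1 : ∀ᵐ x ∂(uniformOn (Set.Icc 1 n)), x ∈ Finset.Icc 1 n := by
    have := ae_cond_mem (μ := (Measure.count : Measure ℕ)) (s := Set.Icc 1 n) (by measurability)
    filter_upwards [this] with x hx
    simpa using hx
  exact (Measure.quasiMeasurePreserving_eval (μ := fun _ : Fin n => uniformOn (Set.Icc 1 n)) i).ae h1

lemma all_integrable {E : Type*} [NormedAddCommGroup E] [SecondCountableTopology E]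
    [MeasurableSpace E] [BorelSpace E] (n : ℕ) (f : (Fin n → ℕ) → E) :
    Integrable f (unifVec n) := by
  have hm : Measurable f := Measurable.of_discrete
  refine Integrable.of_bound hm.aestronglyMeasurable
    (∑ ω ∈ Fintype.piFinset (fun _ : Fin n => Finset.Icc 1 n), ‖f ω‖) ?_
  filter_upwards [ae_mem n] with ω hω
  exact Finset.single_le_sum (f := fun ω => ‖f ω‖) (fun _ _ => norm_nonneg _)
    (Fintype.mem_piFinset.2 hω)

lemma memLp_unif (n : ℕ) (h : 0 < n) (f : ℕ → ℝ) : MemLp f 2 (uniformOn (Set.Icc 1 n)) := by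
  have := unif_prob n h
  refine MemLp.of_bound Measurable.of_discrete.aestronglyMeasurable
    (∑ x ∈ Finset.Icc 1 n, ‖f x‖) ?_
  have := ae_cond_mem (μ := (Measure.count : Measure ℕ)) (s := Set.Icc 1 n) (by measurability)
  filter_upwards [this] with x hx
  exact Finset.single_le_sum (f := fun x => ‖f x‖) (fun _ _ => norm_nonneg _) (by simpa using hx)


lemma integrable_unif {E : Type*} [NormedAddCommGroup E] [SecondCountableTopology E]
    [MeasurableSpace E] [BorelSpace E] (n : ℕ) (f : ℕ → E) :
    Integrable f (uniformOn (Set.Icc 1 n)) := by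
  have hm : Measurable f := Measurable.of_discrete
  refine Integrable.of_bound hm.aestronglyMeasurable
    (∑ x ∈ Finset.Icc 1 n, ‖f x‖) ?_
  have := ae_cond_mem (μ := (Measure.count : Measure ℕ)) (s := Set.Icc 1 n) (by measurability)
  filter_upwards [this] with x hx
  exact Finset.single_le_sum (f := fun x => ‖f x‖) (fun _ _ => norm_nonneg _) (by simpa using hx)

lemma sum_dvd (n k : ℕ) : ∑ x ∈ Finset.Icc 1 n, (if k ∣ x then (1 : ℝ) else 0) = ((n / k : ℕ) : ℝ) := by
  rw [← Nat.Ioc_filter_dvd_card_eq_div, Finset.sum_boole]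
  rfl

lemma second_moment (n k : ℕ) (hk : 0 < k) (hkn : k ≤ n) :
    ∫ ω, (zz n k ω - n / k) ^ 2 ∂(unifVec n) ≤ 2 * (n / k : ℝ) := by
  have h0 : 0 < n := by omega
  have hn' : (0 : ℝ) < n := by exact_mod_cast h0
  have hk' : (0 : ℝ) < k := by exact_mod_cast hk
  have hP := unif_prob n h0
  set Y : ℕ → ℝ := fun x => if k ∣ x then 1 else 0 with hY
  have hmean : ∫ ω, zz n k ω ∂(unifVec n) = ((n / k : ℕ) : ℝ) := by
    unfold zz
    rw [integral_finsetSum _ (fun i _ => all_integrable n _)]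
    have : ∀ i : Fin n, ∫ ω, (if k ∣ ω i then (1 : ℝ) else 0) ∂(unifVec n)
        = (n : ℝ)⁻¹ * ((n / k : ℕ) : ℝ) := by
      intro i
      have h1 := integral_comp_eval (μ := fun _ : Fin n => uniformOn (Set.Icc 1 n)) (i := i) (f := Y)
        Measurable.of_discrete.aestronglyMeasurable
      rw [integral_unif, sum_dvd] at h1
      exact h1
    simp_rw [this]
    simp
    field_simp
  have hvar : Var[fun ω => zz n k ω; unifVec n] ≤ (n / k : ℝ) := by
    have h1 := variance_sum_pi (μ := fun _ : Fin n => uniformOn (Set.Icc 1 n)) (X := fun _ => Y)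
      (fun _ => memLp_unif n h0 _)
    have e1 : (∑ i : Fin n, fun ω : Fin n → ℕ => Y (ω i)) = fun ω => zz n k ω := by
      ext ω
      simp [zz, hY]
    rw [e1] at h1
    have h2 : Var[Y; uniformOn (Set.Icc 1 n)] ≤ (n : ℝ)⁻¹ * ((n / k : ℕ) : ℝ) := by
      refine (variance_le_expectation_sq Measurable.of_discrete.aestronglyMeasurable).trans
        (le_of_eq ?_)
      rw [integral_unif, ← sum_dvd, smul_eq_mul]
      congr 1
      refine Finset.sum_congr rfl fun x _ => ?_
      simp [hY]
    have h3 : ((n / k : ℕ) : ℝ) ≤ n / k := Nat.cast_div_le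
    unfold unifVec
    rw [h1, Finset.sum_const, Finset.card_univ, Fintype.card_fin, nsmul_eq_mul]
    calc _ ≤ (n : ℝ) * ((n : ℝ)⁻¹ * ((n / k : ℕ) : ℝ)) := by gcongr
      _ = ((n / k : ℕ) : ℝ) := by field_simp
      _ ≤ _ := h3
  have h2 : MemLp (fun ω => zz n k ω) 2 (unifVec n) := by
    refine MemLp.of_bound Measurable.of_discrete.aestronglyMeasurable n ?_
    refine Eventually.of_forall fun ω => ?_
    rw [Real.norm_eq_abs, abs_of_nonneg (zz_nonneg _ _ _)]
    exact zz_le _ _ _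
  have h3 := variance_eq_sub h2
  rw [hmean] at h3
  have h4 : ∫ ω, (zz n k ω - n / k) ^ 2 ∂(unifVec n)
      = ∫ ω, ((fun ω => zz n k ω) ^ 2) ω ∂(unifVec n) - 2 * (n / k) * ((n / k : ℕ) : ℝ) + (n / k : ℝ) ^ 2 := by
    have : ∀ ω, (zz n k ω - n / k) ^ 2 = ((fun ω => zz n k ω) ^ 2) ω - 2 * (n / k) * zz n k ω + (n / k : ℝ) ^ 2 := by
      intro ω
      simp only [Pi.pow_apply]
      ring
    simp_rw [this]
    rw [integral_add (all_integrable n _) (all_integrable n _),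
      integral_sub (all_integrable n _) (all_integrable n _), integral_const_mul, hmean]
    simp
  have h5 := floor_err n k h0 hk
  have h6 : |((n / k : ℕ) : ℝ) - n / k| ≤ 1 := by
    have e1 : ((n / k : ℕ) : ℝ) - n / k = n * (((n / k : ℕ) : ℝ) / n - 1 / k) := by field_simp
    rw [e1, abs_mul, abs_of_pos hn']
    calc _ ≤ (n : ℝ) * (1 / n) := by gcongr
      _ = 1 := by field_simp
  have h7 : (((n / k : ℕ) : ℝ) - n / k) ^ 2 ≤ 1 := by
    rw [← sq_abs]
    exact pow_le_one₀ (abs_nonneg _) h6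
  have h8 : (1 : ℝ) ≤ n / k := by
    rw [le_div_iff₀ hk', one_mul]
    exact_mod_cast hkn
  rw [h4]
  nlinarith [h3, hvar, h7, h8]

/-- The normalized statistic. -/
noncomputable def TT (e : ℕ) (n : ℕ) (ω : Fin n → ℕ) : ℝ :=
  (1 / (((e + 2 : ℕ) : ℝ) * (n : ℝ) ^ ((2 * ((e + 2 : ℕ) : ℝ) - 1) / 2))) *
              ((∑ i : Fin (e + 2) → Fin n,
                  if Finset.univ.gcd (fun t : Fin (e + 2) => ω (i t)) = 1 then (1 : ℝ) else 0)
                - (n : ℝ) ^ (e + 2) * ∏' p : Nat.Primes, (1 - 1 / (p : ℝ) ^ (e + 2)))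

/-- The linearized statistic. -/
noncomputable def MM (e : ℕ) (n : ℕ) (ω : Fin n → ℕ) : ℝ :=
  (1 / √(n : ℝ)) * ∑ i, (ff e (ω i) - cc e n)

lemma TT_sub_MM (e n : ℕ) (h0 : 0 < n) :
    ∫ ω, |TT e n ω - MM e n ω| ∂(unifVec n)
      ≤ (1 / √(n : ℝ)) * 2 + 2 * (e + 2) ^ 2 * (hn n / √(n : ℝ)) := by
  have hn' : (0 : ℝ) < n := by exact_mod_cast h0
  have hs : 0 < √(n : ℝ) := Real.sqrt_pos.2 hn'
  have hpow : (n : ℝ) ^ ((2 * ((e + 2 : ℕ) : ℝ) - 1) / 2) = (n : ℝ) ^ (e + 1) * √(n : ℝ) := by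
    rw [Real.sqrt_eq_rpow, ← Real.rpow_natCast, ← Real.rpow_add hn']
    congr 1
    push_cast
    ring
  have hpt : ∀ᵐ ω ∂(unifVec n), |TT e n ω - MM e n ω| ≤
      (1 / ((e + 2) * ((n : ℝ) ^ (e + 1) * √(n : ℝ)))) * (2 * (n : ℝ) ^ (e + 1)
      + (e + 2) ^ 2 * (n : ℝ) ^ e * ∑ k ∈ Finset.Icc 1 n, (zz n k ω - n / k) ^ 2) := by
    filter_upwards [ae_mem n] with ω hω
    have h := decomp e n h0 ω hω _ rfl
    have e1 : TT e n ω - MM e n ω = (1 / ((e + 2) * ((n : ℝ) ^ (e + 1) * √(n : ℝ)))) *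
      (((∑ i : Fin (e + 2) → Fin n,
      if Finset.univ.gcd (fun t : Fin (e + 2) => ω (i t)) = 1 then (1 : ℝ) else 0)
      - (n : ℝ) ^ (e + 2) * ∏' p : Nat.Primes, (1 - 1 / (p : ℝ) ^ (e + 2)))
        - (e + 2) * (n : ℝ) ^ (e + 1) * ∑ i, (ff e (ω i) - cc e n)) := by
      unfold TT MM
      rw [hpow, mul_sub (1 / ((e + 2) * ((n : ℝ) ^ (e + 1) * √(n : ℝ))))]
      push_cast
      congr 1
      have : (e : ℝ) + 2 ≠ 0 := by positivity
      field_simp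
    rw [e1, abs_mul, abs_of_nonneg (by positivity)]
    gcongr
  refine (integral_mono_ae (all_integrable n _) (all_integrable n _) hpt).trans ?_
  rw [integral_const_mul, integral_add (all_integrable n _) (all_integrable n _), integral_const_mul,
    integral_const_mul, integral_finsetSum _ (fun k _ => all_integrable n _)]
  have hS : ∑ k ∈ Finset.Icc 1 n, ∫ ω, (zz n k ω - n / k) ^ 2 ∂(unifVec n) ≤ 2 * n * hn n := by
    unfold hn
    rw [Finset.mul_sum]
    refine Finset.sum_le_sum fun k hk => ?_
    simp only [Finset.mem_Icc] at hk
    refine (second_moment n k hk.1 hk.2).trans (le_of_eq (by ring))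
  simp only [integral_const, probReal_univ, one_smul]
  calc _ ≤ (1 / ((e + 2) * ((n : ℝ) ^ (e + 1) * √(n : ℝ)))) * (2 * (n : ℝ) ^ (e + 1)
      + (e + 2) ^ 2 * (n : ℝ) ^ e * (2 * n * hn n)) := by gcongr
    _ = (1 / (e + 2 : ℝ)) * ((1 / √(n : ℝ)) * 2 + 2 * (e + 2) ^ 2 * (hn n / √(n : ℝ))) := by
      have : (e : ℝ) + 2 ≠ 0 := by positivity
      field_simp
      ring
    _ ≤ 1 * _ := by
      have := hn_nonneg n
      gcongr
      rw [div_le_one (by positivity)]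
      have : (0 : ℝ) ≤ e := by positivity
      linarith
    _ = _ := one_mul _

lemma charM (e : ℕ) (t : ℝ) (s2 : ℝ)
    (hs2 : s2 = ∏' p : Nat.Primes, (1 - 2 / (p : ℝ) ^ (e + 2) + 1 / (p : ℝ) ^ (2 * e + 3))
      - (∏' p : Nat.Primes, (1 - 1 / (p : ℝ) ^ (e + 2))) ^ 2) :
    Tendsto (fun n : ℕ => ∫ ω, Complex.exp (Complex.I * ((t * MM e n ω : ℝ) : ℂ)) ∂(unifVec n)) atTop
      (nhds (Complex.exp (-((s2 * t ^ 2 / 2 : ℝ) : ℂ)))) := by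
  set G : ℕ → ℂ := fun n => (n : ℂ)⁻¹ * ∑ x ∈ Finset.Icc 1 n,
      (Complex.exp (Complex.I * ((t / √(n : ℝ) * (ff e x - cc e n) : ℝ) : ℂ)) - 1) with hG
  have h1 : Tendsto (fun n : ℕ => (n : ℂ) * G n) atTop (nhds (-((s2 * t ^ 2 / 2 : ℝ) : ℂ))) := by
    refine (clt_core e t s2 hs2).congr' ?_
    filter_upwards [eventually_gt_atTop 0] with n h0
    have : (n : ℂ) ≠ 0 := by exact_mod_cast h0.ne'
    simp only [hG]
    rw [mul_inv_cancel_left₀ this]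
  refine (Complex.tendsto_one_add_pow_exp_of_tendsto h1).congr' ?_
  filter_upwards [eventually_gt_atTop 0] with n h0
  have hne : (n : ℂ) ≠ 0 := by exact_mod_cast h0.ne'
  have hP := unif_prob n h0
  have h2 := integral_fintype_prod_eq_pow (ι := Fin n) (μ := uniformOn (Set.Icc 1 n))
    (fun x : ℕ => Complex.exp (Complex.I * ((t / √(n : ℝ) * (ff e x - cc e n) : ℝ) : ℂ)))
  rw [Fintype.card_fin, integral_unif] at h2
  have e1 : 1 + G n = (n : ℝ)⁻¹ • ∑ x ∈ Finset.Icc 1 n,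
      Complex.exp (Complex.I * ((t / √(n : ℝ) * (ff e x - cc e n) : ℝ) : ℂ)) := by
    simp only [hG]
    rw [Finset.sum_sub_distrib, Complex.real_smul]
    simp only [Finset.sum_const, Nat.card_Icc, add_tsub_cancel_right, nsmul_eq_mul]
    push_cast
    field_simp
    ring
  rw [e1, ← h2]
  unfold unifVec
  congr 1
  ext ω
  rw [← Complex.exp_sum]
  congr 1
  unfold MM
  push_cast
  rw [Finset.mul_sum, Finset.mul_sum, Finset.mul_sum]
  refine Finset.sum_congr rfl fun i _ => ?_
  ring

lemma charT (e : ℕ) (t : ℝ) (s2 : ℝ)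
    (hs2 : s2 = ∏' p : Nat.Primes, (1 - 2 / (p : ℝ) ^ (e + 2) + 1 / (p : ℝ) ^ (2 * e + 3))
      - (∏' p : Nat.Primes, (1 - 1 / (p : ℝ) ^ (e + 2))) ^ 2) :
    Tendsto (fun n : ℕ => ∫ ω, Complex.exp (Complex.I * ((t * TT e n ω : ℝ) : ℂ)) ∂(unifVec n)) atTop
      (nhds (Complex.exp (-((s2 * t ^ 2 / 2 : ℝ) : ℂ)))) := by
  have hM := charM e t s2 hs2
  have hr : Tendsto (fun n : ℕ => |t| * ((1 / √(n : ℝ)) * 2 + 2 * (e + 2) ^ 2 * (hn n / √(n : ℝ))))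
      atTop (nhds 0) := by
    have h1 : Tendsto (fun n : ℕ => 1 / √(n : ℝ)) atTop (nhds 0) := by
      simpa [Function.comp_def] using
        (tendsto_inv_atTop_zero.comp Real.tendsto_sqrt_atTop).comp (tendsto_natCast_atTop_atTop (R := ℝ))
    simpa using ((h1.mul_const 2).add (hn_sqrt.const_mul (2 * ((e : ℝ) + 2) ^ 2))).const_mul |t|
  have hd : Tendsto (fun n : ℕ =>
      ∫ ω, Complex.exp (Complex.I * ((t * TT e n ω : ℝ) : ℂ)) ∂(unifVec n)
      - ∫ ω, Complex.exp (Complex.I * ((t * MM e n ω : ℝ) : ℂ)) ∂(unifVec n)) atTop (nhds 0) := by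
    refine squeeze_zero_norm' ?_ hr
    filter_upwards [eventually_gt_atTop 0] with n h0
    rw [← integral_sub (all_integrable n _) (all_integrable n _)]
    refine (norm_integral_le_integral_norm _).trans ?_
    refine le_trans ?_ (mul_le_mul_of_nonneg_left (TT_sub_MM e n h0) (abs_nonneg t))
    rw [← integral_const_mul]
    refine integral_mono (all_integrable n _) (all_integrable n _) fun ω => ?_
    have e1 : Complex.exp (Complex.I * ((t * TT e n ω : ℝ) : ℂ))
        - Complex.exp (Complex.I * ((t * MM e n ω : ℝ) : ℂ))
        = Complex.exp (Complex.I * ((t * MM e n ω : ℝ) : ℂ)) *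
          (Complex.exp (Complex.I * ((t * (TT e n ω - MM e n ω) : ℝ) : ℂ)) - 1) := by
      rw [mul_sub, ← Complex.exp_add, mul_one]
      congr 2
      push_cast
      ring
    simp only
    rw [e1, norm_mul, mul_comm Complex.I, Complex.norm_exp_ofReal_mul_I, one_mul, ← abs_mul]
    exact Real.norm_exp_I_mul_ofReal_sub_one_le
  simpa using hd.add hM

lemma s2_nonneg (e : ℕ) :
    0 ≤ ∏' p : Nat.Primes, (1 - 2 / (p : ℝ) ^ (e + 2) + 1 / (p : ℝ) ^ (2 * e + 3))
      - (∏' p : Nat.Primes, (1 - 1 / (p : ℝ) ^ (e + 2))) ^ 2 := by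
  by_contra hneg
  push Not at hneg
  have h := charM e 1 _ rfl
  have h2 := h.norm
  have h3 : ∀ n : ℕ, ‖∫ ω, Complex.exp (Complex.I * ((1 * MM e n ω : ℝ) : ℂ)) ∂(unifVec n)‖ ≤ 1 := by
    intro n
    refine (norm_integral_le_integral_norm _).trans (le_of_eq ?_)
    have : ∀ ω, ‖Complex.exp (Complex.I * ((1 * MM e n ω : ℝ) : ℂ))‖ = 1 := by
      intro ω
      rw [mul_comm Complex.I, Complex.norm_exp_ofReal_mul_I]
    simp_rw [this]
    simp
  have h4 := le_of_tendsto' h2 h3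
  rw [← Complex.ofReal_neg, Complex.norm_exp_ofReal, Real.exp_le_one_iff] at h4
  linarith


/-- For `d ≥ 2`, the normalized count of coprime `d`-tuples
`(1/(d n^{(2d−1)/2}))(∑_{1≤i₁,…,i_d≤n} 1_{gcd(X_{i₁},…,X_{i_d})=1} − n^d ∏_p (1−1/p^d))`
converges in distribution to `N(0, ∏_p (1−2/p^d+1/p^{2d−1}) − (∏_p (1−1/p^d))²)`;
convergence in distribution is stated as convergence of integrals of every
bounded continuous test function. -/
theorem clt_coprime_tuples (d : ℕ) (hd : 2 ≤ d) :
    ∀ g : ℝ →ᵇ ℝ,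
      Tendsto
        (fun n : ℕ =>
          ∫ ω, g ((1 / ((d : ℝ) * (n : ℝ) ^ ((2 * (d : ℝ) - 1) / 2))) *
              ((∑ i : Fin d → Fin n,
                  if Finset.univ.gcd (fun t : Fin d => ω (i t)) = 1 then (1 : ℝ) else 0)
                - (n : ℝ) ^ d * ∏' p : Nat.Primes, (1 - 1 / (p : ℝ) ^ d))) ∂(unifVec n))
        atTop
        (nhds (∫ x, g x
          ∂(gaussianReal 0 (Real.toNNReal
              (∏' p : Nat.Primes, (1 - 2 / (p : ℝ) ^ d + 1 / (p : ℝ) ^ (2 * d - 1))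
                - (∏' p : Nat.Primes, (1 - 1 / (p : ℝ) ^ d)) ^ 2))))) := by
  intro g
  obtain ⟨e, rfl⟩ : ∃ e, d = e + 2 := ⟨d - 2, by omega⟩
  rw [show 2 * (e + 2) - 1 = 2 * e + 3 by omega]
  set s2 := ∏' p : Nat.Primes, (1 - 2 / (p : ℝ) ^ (e + 2) + 1 / (p : ℝ) ^ (2 * e + 3))
      - (∏' p : Nat.Primes, (1 - 1 / (p : ℝ) ^ (e + 2))) ^ 2 with hs2
  have hs0 : 0 ≤ s2 := s2_nonneg e
  have hmeas : ∀ n, AEMeasurable (TT e n) (unifVec n) := fun n => Measurable.of_discrete.aemeasurable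
  let law : ℕ → ProbabilityMeasure ℝ := fun n =>
    ⟨(unifVec n).map (TT e n), Measure.isProbabilityMeasure_map (hmeas n)⟩
  let lim : ProbabilityMeasure ℝ := ⟨gaussianReal 0 s2.toNNReal, inferInstance⟩
  have hlim : Tendsto law atTop (nhds lim) := by
    rw [ProbabilityMeasure.tendsto_iff_tendsto_charFun]
    intro t
    have e1 : charFun (lim : Measure ℝ) t = Complex.exp (-((s2 * t ^ 2 / 2 : ℝ) : ℂ)) := by
      change charFun (gaussianReal 0 s2.toNNReal) t = _
      rw [charFun_gaussianReal, Real.coe_toNNReal _ hs0]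
      congr 1
      push_cast
      ring
    rw [e1]
    refine (charT e t s2 hs2).congr fun n => ?_
    change _ = charFun ((unifVec n).map (TT e n)) t
    rw [charFun_apply_real, integral_map (hmeas n) (by fun_prop)]
    congr 1
    ext ω
    congr 1
    push_cast
    ring
  rw [ProbabilityMeasure.tendsto_iff_forall_integral_tendsto] at hlim
  refine (hlim g).congr fun n => ?_
  change ∫ x, g x ∂((unifVec n).map (TT e n)) = _
  rw [integral_map (hmeas n) g.continuous.aestronglyMeasurable]
  rfl
end

section
/- For every ε > 0 there exists K such that for all sufficiently large k₁, k₂ with K ≤ k₁ < k₂, and all sufficiently large n: (1/n)·log P( ∑_{p ∈ S(k₁,k₂)} Y_p² > εn² ) ≤ 4·log log k₂ + 4 − (ε/8)·log k₁. -/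
open MeasureTheory ProbabilityTheory Filter Real

/-- `S(k₁,k₂)`: the finite set of primes `p` with `k₁ < p ≤ k₂`. -/
def primesIn (k₁ k₂ : ℕ) : Finset ℕ := (Finset.Ioc k₁ k₂).filter Nat.Prime

/-- `Y_p = #{1 ≤ i ≤ n : p ∣ X_i}`. -/
def Yp (n : ℕ) (p : ℕ) (ω : Fin n → ℕ) : ℕ :=
  (Finset.univ.filter fun i : Fin n => p ∣ ω i).card

lemma aux_dvd (n d : ℕ) (hn : 1 ≤ n) (hd : 1 ≤ d) :
    uniformOn (Set.Icc 1 n) {x : ℕ | d ∣ x} ≤ (d : ENNReal)⁻¹ := by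
  have h1 : (Set.Icc 1 n : Set ℕ) = ((Finset.Ioc 0 n : Finset ℕ) : Set ℕ) := by
    ext x; simp [Nat.lt_iff_add_one_le]
  have h2 : uniformOn (Set.Icc 1 n) {x : ℕ | d ∣ x}
      = uniformOn (Set.Icc 1 n) ((((Finset.Ioc 0 n).filter (fun x => d ∣ x) : Finset ℕ)) : Set ℕ) := by
    rw [← uniformOn_inter_self (Set.finite_Icc 1 n)]
    congr 1
    ext x; simp [Nat.lt_iff_add_one_le]
  rw [h2, h1, uniformOn_apply_finset,
    Finset.inter_eq_right.2 (Finset.filter_subset _ _), Nat.Ioc_filter_dvd_card_eq_div]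
  simp only [Nat.card_Ioc, Nat.sub_zero]
  have hd0 : (d : ENNReal) ≠ 0 := by simp; omega
  have hn0 : (n : ENNReal) ≠ 0 := by simp; omega
  rw [ENNReal.div_le_iff hn0 (by simp), mul_comm, ← div_eq_mul_inv,
    ENNReal.le_div_iff_mul_le (by simp [hd0]) (by simp)]
  exact_mod_cast Nat.div_mul_le_self n d

lemma aux_one (n : ℕ) (hn : 1 ≤ n) (B : Finset ℕ) (hB : ∀ p ∈ B, p.Prime) (c : ℕ → ENNReal) :
    ∫⁻ x, ∏ p ∈ B, (1 + c p * (if p ∣ x then 1 else 0)) ∂(uniformOn (Set.Icc 1 n))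
      ≤ ∏ p ∈ B, (1 + c p * (p : ENNReal)⁻¹) := by
  simp_rw [Finset.prod_one_add]
  rw [lintegral_finsetSum _ (fun _ _ => Measurable.of_discrete)]
  refine Finset.sum_le_sum fun t ht => ?_
  rw [Finset.mem_powerset] at ht
  have h : ∀ x : ℕ, ∏ p ∈ t, (c p * (if p ∣ x then 1 else 0))
      = (∏ p ∈ t, c p) * Set.indicator {x : ℕ | (∏ p ∈ t, p) ∣ x} (fun _ => 1) x := by
    intro x
    rw [Finset.prod_mul_distrib]
    congr 1
    by_cases hx : (∏ p ∈ t, p) ∣ x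
    · rw [Set.indicator_of_mem (by exact hx)]
      refine Finset.prod_eq_one fun p hp => ?_
      rw [if_pos ((Finset.dvd_prod_of_mem (fun p => p) hp).trans hx)]
    · rw [Set.indicator_of_notMem (by exact hx)]
      by_contra hne
      apply hx
      refine Finset.prod_primes_dvd x (fun p hp => (hB p (ht hp)).prime) fun p hp => ?_
      by_contra hpx
      exact hne (Finset.prod_eq_zero hp (if_neg hpx))
  simp_rw [h]
  rw [lintegral_const_mul _ Measurable.of_discrete, lintegral_indicator (by exact .of_discrete),
    Finset.prod_mul_distrib]
  simp only [lintegral_const, one_mul, Measure.restrict_apply_univ]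
  gcongr
  refine (aux_dvd n _ hn (Finset.prod_pos fun p hp => (hB p (ht hp)).pos)).trans ?_
  rw [Nat.cast_prod, ENNReal.prod_inv_distrib]
  intro a ha b hb _
  simp

lemma aux_F (n : ℕ) (B : Finset ℕ) (c : ℕ → ENNReal) (ω : Fin n → ℕ) :
    ∏ i, ∏ p ∈ B, (1 + c p * (if p ∣ ω i then 1 else 0)) = ∏ p ∈ B, (1 + c p) ^ (Yp n p ω) := by
  rw [Finset.prod_comm]
  refine Finset.prod_congr rfl fun p _ => ?_
  have : ∀ i : Fin n, (1 + c p * (if p ∣ ω i then 1 else 0)) = if p ∣ ω i then 1 + c p else 1 := by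
    intro i; split_ifs <;> simp
  simp_rw [this]
  rw [Finset.prod_ite]
  simp [Yp]

lemma aux_int (n : ℕ) (hn : 1 ≤ n) (B : Finset ℕ) (hB : ∀ p ∈ B, p.Prime) (c : ℕ → ENNReal) :
    ∫⁻ ω, ∏ p ∈ B, (1 + c p) ^ (Yp n p ω) ∂(unifVec n)
      ≤ (∏ p ∈ B, (1 + c p * (p : ENNReal)⁻¹)) ^ n := by
  have : IsProbabilityMeasure (uniformOn (Set.Icc 1 n)) :=
    isProbabilityMeasure_uniformOn (Set.finite_Icc 1 n) ⟨1, by simp [hn]⟩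
  simp_rw [← aux_F]
  unfold unifVec
  set g : ℕ → ENNReal := fun x => ∏ p ∈ B, (1 + c p * (if p ∣ x then 1 else 0)) with hg
  have hgm : Measurable g := .of_discrete
  have hi := iIndepFun_pi (μ := fun _ : Fin n => uniformOn (Set.Icc 1 n)) (X := fun _ => g)
    (fun _ => hgm.aemeasurable)
  have := lintegral_prod_eq_prod_lintegral_of_indepFun Finset.univ _ hi
    (fun i => hgm.comp (measurable_pi_apply i))
  refine this.le.trans ?_
  have h2 : ∀ i : Fin n, ∫⁻ ω, g (ω i) ∂(Measure.pi fun _ : Fin n => uniformOn (Set.Icc 1 n))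
      = ∫⁻ x, g x ∂(uniformOn (Set.Icc 1 n)) := fun i =>
    (measurePreserving_eval (fun _ : Fin n => uniformOn (Set.Icc 1 n)) i).lintegral_comp hgm
  simp_rw [h2]
  simp only [Finset.prod_const, Finset.card_univ, Fintype.card_fin]
  gcongr
  exact aux_one n hn B hB c

/-- Pointwise bound. -/
lemma aux_point (ε L : ℝ) (n : ℕ) (hn : 1 ≤ n) (S : Finset ℕ) (y : ℕ → ℕ) (hy : ∀ p, y p ≤ n)
    (hS0 : ∀ p ∈ S, 0 < p) (hL : 16 ≤ L) (hS : ∀ p ∈ S, L ≤ Real.log p)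
    (htail : ∑ p ∈ S, (p : ℝ) ^ (-(3/2) : ℝ) ≤ ε / 3)
    (hsum : ε * (n : ℝ) ^ 2 < ∑ p ∈ S, (y p : ℝ) ^ 2) :
    ∃ B ⊆ S, n * (ε / 8 * L) + n * ∑ p ∈ B, (p : ℝ) ^ (-(3/4) : ℝ)
      ≤ ∑ p ∈ B, (y p : ℝ) * (1 / 4 * Real.log p) := by
  classical
  have hn' : (0:ℝ) < n := by exact_mod_cast hn
  refine ⟨S.filter (fun p : ℕ => n * (p : ℝ) ^ (-(3/4) : ℝ) ≤ y p), Finset.filter_subset _ _, ?_⟩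
  set B := S.filter (fun p : ℕ => n * (p : ℝ) ^ (-(3/4) : ℝ) ≤ y p) with hB
  have h1 : ∑ p ∈ S.filter (fun p : ℕ => ¬ (n * (p : ℝ) ^ (-(3/4) : ℝ) ≤ y p)), (y p : ℝ) ^ 2
      ≤ n ^ 2 * (ε / 3) := by
    calc _ ≤ ∑ p ∈ S.filter (fun p : ℕ => ¬ (n * (p : ℝ) ^ (-(3/4) : ℝ) ≤ y p)),
          (n:ℝ) ^ 2 * (p : ℝ) ^ (-(3/2) : ℝ) := by
          refine Finset.sum_le_sum fun p hp => ?_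
          rw [Finset.mem_filter, not_le] at hp
          have : (p : ℝ) ^ (-(3/2) : ℝ) = ((p : ℝ) ^ (-(3/4) : ℝ)) ^ 2 := by
            rw [← Real.rpow_natCast, ← Real.rpow_mul (by positivity)]; norm_num
          rw [this, ← mul_pow]
          exact pow_le_pow_left₀ (by positivity) hp.2.le 2
      _ ≤ ∑ p ∈ S, (n:ℝ) ^ 2 * (p : ℝ) ^ (-(3/2) : ℝ) :=
          Finset.sum_le_sum_of_subset_of_nonneg (Finset.filter_subset _ _)
            (fun _ _ _ => by positivity)
      _ ≤ _ := by rw [← Finset.mul_sum]; gcongr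
  have h2 := Finset.sum_filter_add_sum_filter_not S
    (fun p : ℕ => n * (p : ℝ) ^ (-(3/4) : ℝ) ≤ y p) (fun p => (y p : ℝ) ^ 2)
  have h3 : (n:ℝ) ^ 2 * (2 * ε / 3) ≤ ∑ p ∈ B, (y p : ℝ) ^ 2 := by
    rw [← hB] at h2; linarith
  have h4 : n * (ε / 8 * L) ≤ ∑ p ∈ B, (y p : ℝ) * (3 / 16 * L) := by
    have : ∑ p ∈ B, (y p : ℝ) ^ 2 ≤ n * ∑ p ∈ B, (y p : ℝ) := by
      rw [Finset.mul_sum]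
      refine Finset.sum_le_sum fun p _ => ?_
      rw [sq]
      have : (y p : ℝ) ≤ n := by exact_mod_cast hy p
      gcongr
    have h5 : (n:ℝ) * (2 * ε / 3) ≤ ∑ p ∈ B, (y p : ℝ) := by
      have : (n:ℝ) * (n * (2 * ε / 3)) ≤ n * ∑ p ∈ B, (y p : ℝ) := by linarith
      exact le_of_mul_le_mul_left this hn'
    rw [← Finset.sum_mul]
    have := mul_le_mul_of_nonneg_right h5 (show 0 ≤ 3 / 16 * L by linarith)
    linarith
  refine (add_le_add_left h4 _).trans ?_
  rw [Finset.mul_sum, ← Finset.sum_add_distrib]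
  refine Finset.sum_le_sum fun p hp => ?_
  rw [hB, Finset.mem_filter] at hp
  have h6 := hS p hp.1
  have h7 : (0:ℝ) ≤ y p := by positivity
  nlinarith [hp.2, mul_le_mul_of_nonneg_left h6 h7]

lemma aux_main (ε L : ℝ) (n : ℕ) (hn : 1 ≤ n) (S : Finset ℕ)
    (hSp : ∀ p ∈ S, p.Prime) (hL : 16 ≤ L) (hS : ∀ p ∈ S, L ≤ Real.log p)
    (htail : ∑ p ∈ S, (p : ℝ) ^ (-(3/2) : ℝ) ≤ ε / 3) :
    (unifVec n) {ω | ε * (n : ℝ) ^ 2 < ∑ p ∈ S, (Yp n p ω : ℝ) ^ 2}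
      ≤ 2 ^ S.card * ENNReal.ofReal (Real.exp (- (n * (ε / 8 * L)))) := by
  set M : Finset ℕ → ℝ := fun B => n * (ε / 8 * L) + n * ∑ p ∈ B, (p : ℝ) ^ (-(3/4) : ℝ) with hM
  set c : ℕ → ENNReal := fun p => ENNReal.ofReal ((p : ℝ) ^ (1/4 : ℝ)) with hc
  have hsub : {ω : Fin n → ℕ | ε * (n : ℝ) ^ 2 < ∑ p ∈ S, (Yp n p ω : ℝ) ^ 2}
      ⊆ ⋃ B ∈ S.powerset,
        {ω | ENNReal.ofReal (Real.exp (M B)) ≤ ∏ p ∈ B, (1 + c p) ^ (Yp n p ω)} := by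
    intro ω hω
    obtain ⟨B, hBS, hB⟩ := aux_point ε L n hn S (fun p => Yp n p ω)
      (fun p => (Finset.card_le_univ _).trans (by simp))
      (fun p hp => (hSp p hp).pos) hL hS htail hω
    simp only [Set.mem_iUnion]
    refine ⟨B, Finset.mem_powerset.2 hBS, ?_⟩
    refine (ENNReal.ofReal_le_ofReal (Real.exp_le_exp.2 hB)).trans ?_
    rw [Real.exp_sum, ENNReal.ofReal_prod_of_nonneg (fun _ _ => (Real.exp_pos _).le)]
    refine Finset.prod_le_prod' fun p hp => ?_
    have hp0 : (0:ℝ) < p := by exact_mod_cast (hSp p (hBS hp)).pos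
    rw [Real.exp_nat_mul, ENNReal.ofReal_pow (Real.exp_pos _).le, mul_comm, ← Real.rpow_def_of_pos hp0]
    gcongr
    exact le_add_self
  refine (measure_mono hsub).trans ((measure_biUnion_finset_le _ _).trans ?_)
  rw [← Nat.cast_two, ← Nat.cast_pow, ← Finset.card_powerset, ← nsmul_eq_mul]
  refine Finset.sum_le_card_nsmul _ _ _ fun B hB => ?_
  rw [Finset.mem_powerset] at hB
  have h1 := mul_meas_ge_le_lintegral (μ := unifVec n)
    (f := fun ω => ∏ p ∈ B, (1 + c p) ^ (Yp n p ω)) Measurable.of_discrete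
    (ENNReal.ofReal (Real.exp (M B)))
  have h2 := h1.trans (aux_int n hn B (fun p hp => hSp p (hB hp)) c)
  have h3 : (∏ p ∈ B, (1 + c p * (p : ENNReal)⁻¹)) ^ n
      ≤ ENNReal.ofReal (Real.exp (n * ∑ p ∈ B, (p : ℝ) ^ (-(3/4) : ℝ))) := by
    rw [Real.exp_nat_mul, ENNReal.ofReal_pow (Real.exp_pos _).le, Real.exp_sum,
      ENNReal.ofReal_prod_of_nonneg (fun _ _ => (Real.exp_pos _).le)]
    gcongr with p hp
    have hp0 : (0:ℝ) < p := by exact_mod_cast (hSp p (hB hp)).pos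
    have : (p : ENNReal)⁻¹ = ENNReal.ofReal ((p:ℝ)⁻¹) := by
      rw [ENNReal.ofReal_inv_of_pos hp0, ENNReal.ofReal_natCast]
    rw [hc, this, ← ENNReal.ofReal_mul (by positivity), ← ENNReal.ofReal_one,
      ← ENNReal.ofReal_add (by norm_num) (by positivity)]
    apply ENNReal.ofReal_le_ofReal
    have e : (p : ℝ) ^ (1/4 : ℝ) * (p:ℝ)⁻¹ = (p:ℝ) ^ (-(3/4) : ℝ) := by
      rw [← Real.rpow_neg_one, ← Real.rpow_add hp0]; norm_num
    rw [e, add_comm]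
    exact Real.add_one_le_exp _
  have h4 := h2.trans h3
  rw [mul_comm, ← ENNReal.le_div_iff_mul_le (by simp [Real.exp_pos]) (by simp),
    ← ENNReal.ofReal_div_of_pos (Real.exp_pos _), ← Real.exp_sub] at h4
  refine h4.trans (le_of_eq ?_)
  congr 2
  simp only [hM]; ring

/-- For every `ε > 0` there exists `K` such that for all
`k₁, k₂` with `K ≤ k₁ < k₂` and all sufficiently large `n`:
`(1/n)·log P(∑_{p ∈ S(k₁,k₂)} Y_p² > εn²) ≤ 4 log log k₂ + 4 − (ε/8) log k₁`
(the left-hand side being `−∞` when the probability vanishes). -/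
theorem gcd_counts_truncated_bound (ε : ℝ) (hε : 0 < ε) :
    ∃ K : ℕ, ∀ k₁ k₂ : ℕ, K ≤ k₁ → k₁ < k₂ →
      ∃ N : ℕ, ∀ n ≥ N,
        (((n : ℝ)⁻¹ : ℝ) : EReal) *
            ENNReal.log
              ((unifVec n) {ω | ε * (n : ℝ) ^ 2 < ∑ p ∈ primesIn k₁ k₂, (Yp n p ω : ℝ) ^ 2})
          ≤ ((4 * Real.log (Real.log k₂) + 4 - (ε / 8) * Real.log k₁ : ℝ) : EReal) := by
  have hs : Summable (fun n : ℕ => (n : ℝ) ^ (-(3/2) : ℝ)) :=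
    Real.summable_nat_rpow.2 (by norm_num)
  obtain ⟨s, hs⟩ := summable_iff_vanishing_norm.1 hs (ε / 3) (by positivity)
  refine ⟨max (s.sup id) (⌈Real.exp 16⌉₊), fun k₁ k₂ hK hk => ⟨k₂, fun n hn => ?_⟩⟩
  have hk16 : Real.exp 16 ≤ k₁ :=
    (Nat.le_ceil _).trans (by exact_mod_cast (le_max_right _ _).trans hK)
  have hk0 : (0:ℝ) < k₁ := (Real.exp_pos _).trans_le hk16
  have hL : 16 ≤ Real.log k₁ := (Real.le_log_iff_exp_le hk0).2 hk16
  have hn1 : 1 ≤ n := by omega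
  have hn0 : (0:ℝ) < n := by exact_mod_cast hn1
  have hmem : ∀ p ∈ primesIn k₁ k₂, k₁ < p ∧ p.Prime := by
    intro p hp
    simp only [primesIn, Finset.mem_filter, Finset.mem_Ioc] at hp
    exact ⟨hp.1.1, hp.2⟩
  have hkk : Real.log k₁ ≤ Real.log k₂ := Real.log_le_log hk0 (by exact_mod_cast hk.le)
  have hll : 0 ≤ Real.log (Real.log k₂) := Real.log_nonneg (by linarith)
  have hm := aux_main ε (Real.log k₁) n hn1 (primesIn k₁ k₂) (fun p hp => (hmem p hp).2) hL
    (fun p hp => Real.log_le_log hk0 (by exact_mod_cast (hmem p hp).1.le)) (by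
      refine (le_abs_self _).trans (hs _ ?_).le
      rw [Finset.disjoint_left]
      intro p hp hps
      have h1 : p ≤ s.sup id := Finset.le_sup (f := id) hps
      have h2 := (hmem p hp).1
      have h3 := (le_max_left _ _).trans hK
      omega)
  have hcard : (primesIn k₁ k₂).card ≤ n := by
    refine (Finset.card_filter_le _ _).trans ?_
    simp; omega
  set r : ℝ := 4 * Real.log (Real.log k₂) + 4 - (ε / 8) * Real.log k₁ with hr
  have h2 : (2 : ENNReal) ^ (primesIn k₁ k₂).card ≤ ENNReal.ofReal (Real.exp n) := by
    calc (2 : ENNReal) ^ (primesIn k₁ k₂).card ≤ 2 ^ n := pow_le_pow_right₀ (by norm_num) hcard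
      _ = ENNReal.ofReal (2 ^ n) := by rw [ENNReal.ofReal_pow (by norm_num)]; norm_num
      _ ≤ _ := by
        apply ENNReal.ofReal_le_ofReal
        rw [← mul_one (n:ℝ), Real.exp_nat_mul]
        gcongr
        linarith [Real.add_one_le_exp (1:ℝ)]
  have h3 := hm.trans (mul_le_mul_left h2 _)
  rw [← ENNReal.ofReal_mul (Real.exp_pos _).le, ← Real.exp_add] at h3
  have h4 := h3.trans (ENNReal.ofReal_le_ofReal (Real.exp_le_exp.2
    (show (n:ℝ) + -(n * (ε / 8 * Real.log k₁)) ≤ n * r by rw [hr]; nlinarith)))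
  have h5 := ENNReal.log_le_log h4
  rw [ENNReal.log_ofReal_of_pos (Real.exp_pos _), Real.log_exp] at h5
  refine (mul_le_mul_of_nonneg_left h5 (by exact_mod_cast inv_nonneg.2 hn0.le)).trans ?_
  rw [← EReal.coe_mul, inv_mul_cancel_left₀ hn0.ne']
end
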